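/- If ξ is a coding of ν, an enumeration of an equivalence relation E on ℕ with every equivalence class infinite, and for every e ∈ E the preimage ν⁻¹(e) is infinite, then S_ξ ∪ T_ξ is a symmetric, transitive relation such that [i]_{S_ξ ∪ T_ξ} is infinite for every i in the field of S_ξ ∪ T_ξ. -/

import Mathlib

/-- `E` is an equivalence relation on ℕ, viewed as a set of pairs:
reflexive, symmetric, transitive. -/
def IsEquivRel (E : Set (ℕ × ℕ)) : Prop :=
  (∀ n, (n, n) ∈ E) ∧ (∀ ⦃i j⦄, (i, j) ∈ E → (j, i) ∈ E) ∧
    (∀ ⦃i j k⦄, (i, j) ∈ E → (j, k) ∈ E → (i, k) ∈ E)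

/-- `H` is a symmetric relation. -/
def IsSymRel (H : Set (ℕ × ℕ)) : Prop := ∀ ⦃i j⦄, (i, j) ∈ H → (j, i) ∈ H

/-- `H` is a transitive relation. -/
def IsTransRel (H : Set (ℕ × ℕ)) : Prop :=
  ∀ ⦃i j k⦄, (i, j) ∈ H → (j, k) ∈ H → (i, k) ∈ H

/-- A relation on ℕ is decidable if membership in it is a computable predicate. -/
def DecidableRelSet (R : Set (ℕ × ℕ)) : Prop :=
  ComputablePred (fun p : ℕ × ℕ => p ∈ R)

/-- `ν : ℕ₊ → ℕ × ℕ` (modelled as a function on ℕ, restricted to positive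
arguments) is an enumeration of `R`: a computable function whose range (over
positive arguments) is `R`. -/
def IsEnumeration (ν : ℕ → ℕ × ℕ) (R : Set (ℕ × ℕ)) : Prop :=
  Computable ν ∧ R = {e | ∃ n, 1 ≤ n ∧ ν n = e}

/-- A relation on ℕ is semi-decidable (computably enumerable) if it is the
range of a computable function `ν : ℕ₊ → ℕ × ℕ`. -/
def SemiDecidableRel (R : Set (ℕ × ℕ)) : Prop := ∃ ν, IsEnumeration ν R

/-- A subset of ℕ is semi-decidable (computably enumerable) if it is the range
of a computable function on positive arguments. -/
def SemiDecidableSet (A : Set ℕ) : Prop :=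
  ∃ f : ℕ → ℕ, Computable f ∧ A = {a | ∃ n, 1 ≤ n ∧ f n = a}

/-- `E` is IC: every equivalence class `[i]_E = {j | (i,j) ∈ E}` is infinite. -/
def IC (E : Set (ℕ × ℕ)) : Prop := ∀ i, {j | (i, j) ∈ E}.Infinite

/-- `E` is FC: every equivalence class `[i]_E = {j | (i,j) ∈ E}` is finite. -/
def FC (E : Set (ℕ × ℕ)) : Prop := ∀ i, {j | (i, j) ∈ E}.Finite

/-- Composition of relations: `RS = {(i,k) | ∃ j, (i,j) ∈ R ∧ (j,k) ∈ S}`. -/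
def relComp (R S : Set (ℕ × ℕ)) : Set (ℕ × ℕ) :=
  {p | ∃ j, (p.1, j) ∈ R ∧ (j, p.2) ∈ S}

/-- Converse relation: `R⁻¹ = {(j,i) | (i,j) ∈ R}`. -/
def relInv (R : Set (ℕ × ℕ)) : Set (ℕ × ℕ) := {p | (p.2, p.1) ∈ R}

/-- Transitive closure of a relation, `tc R = ⋃_{n ≥ 1} Rⁿ`. -/
def tc (R : Set (ℕ × ℕ)) : Set (ℕ × ℕ) :=
  {p | Relation.TransGen (fun i j => (i, j) ∈ R) p.1 p.2}

/-- `ξ` is a coding of the enumeration `ν` (with `π = ν ∘ ξ`):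
a computable `ξ : ℕ₊ → ℕ₊` such that `1 < ξ(1)`, `π₁(π(1)) = π₁(ν(1))`,
`max {1, π₁(ν(1))} < π₂(π(1))`, and for every `n ≥ 1`: `ξ(n) < ξ(n+1)`,
`π₁(ν(ξ(n+1))) = π₁(ν(n+1))`, and
`max {π₁(π(n+1)), π₂(π(n))} < π₂(π(n+1))`. -/
def IsCoding (ν : ℕ → ℕ × ℕ) (ξ : ℕ → ℕ) : Prop :=
  Computable ξ ∧
  1 < ξ 1 ∧ (ν (ξ 1)).1 = (ν 1).1 ∧ max 1 (ν 1).1 < (ν (ξ 1)).2 ∧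
  ∀ n, 1 ≤ n →
    ξ n < ξ (n + 1) ∧ (ν (ξ (n + 1))).1 = (ν (n + 1)).1 ∧
    max (ν (ξ (n + 1))).1 (ν (ξ n)).2 < (ν (ξ (n + 1))).2

/-- `R_ξ = {π(n) | n ∈ ℕ₊}` where `π = ν ∘ ξ`. -/
def Rcod (ν : ℕ → ℕ × ℕ) (ξ : ℕ → ℕ) : Set (ℕ × ℕ) :=
  {e | ∃ n, 1 ≤ n ∧ ν (ξ n) = e}

/-- `S_ξ = {(π₂(π(m)), π₂(π(n))) | m, n ∈ ℕ₊ and ν(n) = (ν(m))⁻¹}`. -/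
def Scod (ν : ℕ → ℕ × ℕ) (ξ : ℕ → ℕ) : Set (ℕ × ℕ) :=
  {e | ∃ m, 1 ≤ m ∧ ∃ n, 1 ≤ n ∧ ν n = ((ν m).2, (ν m).1) ∧
    e = ((ν (ξ m)).2, (ν (ξ n)).2)}

/-- `T_ξ = {(π₂(π(m)), π₂(π(n))) | m, n ∈ ℕ₊ and ν(n) = ν(m)}`. -/
def Tcod (ν : ℕ → ℕ × ℕ) (ξ : ℕ → ℕ) : Set (ℕ × ℕ) :=
  {e | ∃ m, 1 ≤ m ∧ ∃ n, 1 ≤ n ∧ ν n = ν m ∧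
    e = ((ν (ξ m)).2, (ν (ξ n)).2)}

/-- The identity relation `I = {(n,n) | n ∈ ℕ}`. -/
def diagRel : Set (ℕ × ℕ) := {p | p.1 = p.2}

/-- The field of a relation: `F(H) = {i | ∃ j, (i,j) ∈ H ∨ (j,i) ∈ H}`. -/
def fld (H : Set (ℕ × ℕ)) : Set ℕ := {i | ∃ j, (i, j) ∈ H ∨ (j, i) ∈ H}

/-!
Write `c n = π₂(π(n))`. Two indices `m, n` give a pair `(c m, c n)` of `S_ξ ∪ T_ξ` exactly when
`ν m` and `ν n` agree up to order, that is, as unordered pairs. So `S_ξ ∪ T_ξ` is the kernel of a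
function on `ℕ₊`, transported along `c`. A transported kernel is always symmetric; since `c` is
strictly increasing on `ℕ₊`, it is also transitive, and the class of `c m` contains the injective
image under `c` of the infinite set of indices at which `ν` takes the value `ν m`.
-/

/-- The kernel `{(m, n) | f m = f n}` of a function `f` on an index set `s`, transported to `ℕ`
along `c : ι → ℕ`. For `S_ξ ∪ T_ξ`, `s` is `ℕ₊`, `f n` is `ν n` as an unordered pair and
`c n = π₂(π(n))`. -/
def kerImage {ι β : Type*} (s : Set ι) (f : ι → β) (c : ι → ℕ) : Set (ℕ × ℕ) :=
  {e | ∃ m ∈ s, ∃ n ∈ s, f m = f n ∧ e = (c m, c n)}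

section KerImage

variable {ι β : Type*} {s : Set ι} {f : ι → β} {c : ι → ℕ}

theorem mk_mem_kerImage {m n : ι} (hm : m ∈ s) (hn : n ∈ s) (h : f m = f n) :
    (c m, c n) ∈ kerImage s f c :=
  ⟨m, hm, n, hn, h, rfl⟩

theorem isSymRel_kerImage : IsSymRel (kerImage s f c) := by
  rintro _ _ ⟨m, hm, n, hn, h, ⟨⟩⟩
  exact mk_mem_kerImage hn hm h.symm

theorem isTransRel_kerImage (hc : s.InjOn c) : IsTransRel (kerImage s f c) := by
  rintro i j k ⟨l, hl, m, hm, hlm, hij⟩ ⟨m', hm', n, hn, hmn, hjk⟩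
  obtain ⟨rfl, rfl⟩ := Prod.mk.inj hij
  obtain ⟨hcm, rfl⟩ := Prod.mk.inj hjk
  obtain rfl : m = m' := hc hm hm' hcm
  exact mk_mem_kerImage hl hn (hlm.trans hmn)

theorem fld_kerImage : fld (kerImage s f c) = c '' s := by
  ext i
  constructor
  · rintro ⟨j, ⟨m, hm, _, _, -, ⟨⟩⟩ | ⟨_, _, n, hn, -, ⟨⟩⟩⟩
    exacts [⟨m, hm, rfl⟩, ⟨n, hn, rfl⟩]
  · rintro ⟨m, hm, rfl⟩
    exact ⟨c m, Or.inl (mk_mem_kerImage hm hm rfl)⟩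

theorem infinite_kerImage_class (hc : s.InjOn c) {m : ι} (hm : m ∈ s)
    (hf : {n | n ∈ s ∧ f n = f m}.Infinite) : {j | (c m, j) ∈ kerImage s f c}.Infinite := by
  refine (hf.image (hc.mono fun _ hn => hn.1)).mono ?_
  rintro _ ⟨n, ⟨hn, hnm⟩, rfl⟩
  exact mk_mem_kerImage hm hn hnm.symm

end KerImage

theorem scod_union_tcod_eq_kerImage (ν : ℕ → ℕ × ℕ) (ξ : ℕ → ℕ) :
    Scod ν ξ ∪ Tcod ν ξ =
      kerImage (Set.Ici 1) (fun n => s((ν n).1, (ν n).2)) (fun n => (ν (ξ n)).2) := by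
  ext e
  constructor
  · rintro (⟨m, hm, n, hn, hmn, rfl⟩ | ⟨m, hm, n, hn, hmn, rfl⟩)
    · exact mk_mem_kerImage hm hn (Sym2.mk_eq_mk_iff.2 (Or.inr (by rw [hmn]; rfl)))
    · exact mk_mem_kerImage hm hn (Sym2.mk_eq_mk_iff.2 (Or.inl hmn.symm))
  · rintro ⟨m, hm, n, hn, hmn, rfl⟩
    rcases Sym2.mk_eq_mk_iff.1 hmn.symm with heq | hswap
    · exact Or.inr ⟨m, hm, n, hn, heq, rfl⟩
    · exact Or.inl ⟨m, hm, n, hn, hswap, rfl⟩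

theorem IsCoding.strictMonoOn {ν : ℕ → ℕ × ℕ} {ξ : ℕ → ℕ} (hξ : IsCoding ν ξ) :
    StrictMonoOn (fun n => (ν (ξ n)).2) (Set.Ici 1) := by
  obtain ⟨-, -, -, -, hstep⟩ := hξ
  exact strictMonoOn_of_lt_add_one Set.ordConnected_Ici fun n _ hn _ =>
    (le_max_right _ _).trans_lt (hstep n hn).2.2

theorem stmt_18_general (ν : ℕ → ℕ × ℕ) (ξ : ℕ → ℕ)
    (hinj : (Set.Ici 1).InjOn fun n => (ν (ξ n)).2)
    (hfib : ∀ m, 1 ≤ m → {n | 1 ≤ n ∧ ν n = ν m}.Infinite) :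
    IsSymRel (Scod ν ξ ∪ Tcod ν ξ) ∧ IsTransRel (Scod ν ξ ∪ Tcod ν ξ) ∧
    ∀ i ∈ fld (Scod ν ξ ∪ Tcod ν ξ),
      {j | (i, j) ∈ Scod ν ξ ∪ Tcod ν ξ}.Infinite := by
  rw [scod_union_tcod_eq_kerImage, fld_kerImage]
  refine ⟨isSymRel_kerImage, isTransRel_kerImage hinj, ?_⟩
  rintro _ ⟨m, hm, rfl⟩
  refine infinite_kerImage_class hinj hm ((hfib m hm).mono ?_)
  rintro n ⟨hn, hnm⟩
  exact ⟨hn, Sym2.mk_eq_mk_iff.2 (Or.inl hnm)⟩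

theorem stmt_18 (E : Set (ℕ × ℕ)) (ν : ℕ → ℕ × ℕ) (ξ : ℕ → ℕ)
    (hE : IsEquivRel E) (hIC : IC E) (hν : IsEnumeration ν E)
    (hpre : ∀ e ∈ E, {n | 1 ≤ n ∧ ν n = e}.Infinite)
    (hξ : IsCoding ν ξ) :
    IsSymRel (Scod ν ξ ∪ Tcod ν ξ) ∧ IsTransRel (Scod ν ξ ∪ Tcod ν ξ) ∧
    ∀ i ∈ fld (Scod ν ξ ∪ Tcod ν ξ),
      {j | (i, j) ∈ Scod ν ξ ∪ Tcod ν ξ}.Infinite :=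
  stmt_18_general ν ξ hξ.strictMonoOn.injOn fun m hm => hpre _ (hν.2 ▸ ⟨m, hm, rfl⟩)
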